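/- For any set 𝔓 of sequential laws that are locally absolutely continuous with respect to 𝚪, a nonnegative adapted process {M_t} is a nonnegative martingale for every law in 𝔓 if and only if it is a nonnegative martingale for every law in the fork-convex hull f-conv(𝔓). -/

import Mathlib

open MeasureTheory ProbabilityTheory Filter Finset Matrix
open scoped Classical

noncomputable section

namespace SeqTest

/-- `ℝ^d`. -/
abbrev RV (d : ℕ) := Fin d → ℝ

/-- The sequence space `Ω = (ℝ^d)^ℕ`. -/
abbrev Seq (d : ℕ) := ℕ → RV d

variable (d : ℕ)


/-- The first `t` coordinates of a sequence. -/
def prefixMap (t : ℕ) : Seq d → (Fin t → RV d) := fun ω s => ω s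

/-- The law of the first `t` coordinates under a sequential law `μ`. -/
def prefixLaw (μ : Measure (Seq d)) (t : ℕ) : Measure (Fin t → RV d) :=
  μ.map (prefixMap d t)

/-- The natural filtration of the coordinate process: `ℱ t = σ(X_0, …, X_{t-1})`. -/
def F : Filtration ℕ (inferInstance : MeasurableSpace (Seq d)) where
  seq t := ⨆ s ∈ Finset.range t, MeasurableSpace.comap (fun ω : Seq d => ω s) inferInstance
  mono' := by
    intro i j hij
    exact biSup_mono fun s hs => Finset.mem_range.mpr
      (lt_of_lt_of_le (Finset.mem_range.mp hs) hij)
  le' := by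
    intro t
    refine iSup₂_le fun s _ => ?_
    exact measurable_iff_comap_le.mp (measurable_pi_apply s)

/-- Local absolute continuity of sequential laws: every prefix law of `μ` is
absolutely continuous w.r.t. the corresponding prefix law of `Γ`. -/
def LocAC (μ Γ : Measure (Seq d)) : Prop := ∀ t, prefixLaw d μ t ≪ prefixLaw d Γ t

/-- The density (likelihood-ratio) process `Z_t^μ = d(μ|_t)/d(Γ|_t)` evaluated along the path. -/
def Z (μ Γ : Measure (Seq d)) (t : ℕ) (ω : Seq d) : ℝ :=
  ((prefixLaw d μ t).rnDeriv (prefixLaw d Γ t) (prefixMap d t ω)).toReal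

/-- The standard Gaussian measure on `ℝ^d`. -/
def stdGaussian : Measure (RV d) := Measure.pi fun _ => gaussianReal 0 1

/-- `Γ` is the law of an i.i.d. sequence of standard Gaussians: characterized through its
finite-dimensional rectangle probabilities. -/
def IsGamma (Γ : Measure (Seq d)) : Prop :=
  IsProbabilityMeasure Γ ∧
    ∀ (t : ℕ) (A : Fin t → Set (RV d)), (∀ s, MeasurableSet (A s)) →
      prefixLaw d Γ t (Set.univ.pi A) = ∏ s, stdGaussian d (A s)

/-- `M` is a nonnegative supermartingale for the sequential law `μ`
(w.r.t. the natural filtration). -/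
def IsNSM (μ : Measure (Seq d)) (M : ℕ → Seq d → ℝ) : Prop :=
  (∀ t ω, 0 ≤ M t ω) ∧ Supermartingale M (F d) μ

/-- `M` is a nonnegative martingale for the sequential law `μ`. -/
def IsNM (μ : Measure (Seq d)) (M : ℕ → Seq d → ℝ) : Prop :=
  (∀ t ω, 0 ≤ M t ω) ∧ Martingale M (F d) μ


/-- `R` is the `(s,h)`-fork-convex combination of `P` with `Q` (relative to the
reference law `Γ`), described through its density process. -/
def IsFCC (Γ P Q : Measure (Seq d)) (s : ℕ) (h : Seq d → ℝ) (R : Measure (Seq d)) : Prop :=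
  IsProbabilityMeasure P ∧ IsProbabilityMeasure Q ∧ LocAC d P Γ ∧ LocAC d Q Γ ∧
  Measurable[F d s] h ∧ (∀ ω, h ω ∈ Set.Icc (0 : ℝ) 1) ∧
  Γ {ω | h ω < 1 ∧ Z d Q Γ s ω = 0} = 0 ∧
  IsProbabilityMeasure R ∧ LocAC d R Γ ∧
  ∀ t : ℕ, (fun ω => Z d R Γ t ω) =ᵐ[Γ]
    (fun ω => if t ≤ s then Z d P Γ t ω
      else h ω * Z d P Γ t ω + (1 - h ω) * Z d Q Γ t ω * (Z d P Γ s ω / Z d Q Γ s ω))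

/-- A set of sequential laws is fork-convex if it is closed under fork-convex combinations. -/
def IsForkConvex (Γ : Measure (Seq d)) (S : Set (Measure (Seq d))) : Prop :=
  ∀ P ∈ S, ∀ Q ∈ S, ∀ (s : ℕ) (h : Seq d → ℝ) (R : Measure (Seq d)),
    IsFCC d Γ P Q s h R → R ∈ S

/-- The fork-convex hull: the smallest fork-convex set containing `𝔓`. -/
def fconv (Γ : Measure (Seq d)) (𝔓 : Set (Measure (Seq d))) : Set (Measure (Seq d)) :=
  ⋂₀ {S | 𝔓 ⊆ S ∧ IsForkConvex d Γ S}

/-- Convergence of sequential laws: the density processes converge in `L¹(Γ)` at every fixed time. -/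
def TendstoLocL1 (Γ : Measure (Seq d)) (Pn : ℕ → Measure (Seq d)) (P : Measure (Seq d)) : Prop :=
  ∀ t, Tendsto (fun n => ∫ ω, |Z d (Pn n) Γ t ω - Z d P Γ t ω| ∂Γ) atTop (nhds 0)

/-- The closed fork-convex hull: the closure of the fork-convex hull under local `L¹(Γ)`
convergence of density processes. -/
def clfconv (Γ : Measure (Seq d)) (𝔓 : Set (Measure (Seq d))) : Set (Measure (Seq d)) :=
  {P | IsProbabilityMeasure P ∧ LocAC d P Γ ∧
    ∃ Pn : ℕ → Measure (Seq d), (∀ n, Pn n ∈ fconv d Γ 𝔓) ∧ TendstoLocL1 d Γ Pn P}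

/-- `μ` is the law of an i.i.d. sequence with marginal `P`. -/
def IsIIDLaw (μ : Measure (Seq d)) (P : Measure (RV d)) : Prop :=
  IsProbabilityMeasure μ ∧
    ∀ (t : ℕ) (A : Fin t → Set (RV d)), (∀ s, MeasurableSet (A s)) →
      prefixLaw d μ t (Set.univ.pi A) = ∏ s, P (A s)

/-- `μ` is the law of an independent sequence with marginals `Ps 0, Ps 1, …`. -/
def IsProductLaw (μ : Measure (Seq d)) (Ps : ℕ → Measure (RV d)) : Prop :=
  IsProbabilityMeasure μ ∧
    ∀ (t : ℕ) (A : Fin t → Set (RV d)), (∀ s, MeasurableSet (A s)) →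
      prefixLaw d μ t (Set.univ.pi A) = ∏ s : Fin t, Ps s (A s)

/-- The set of i.i.d. sequential laws with marginals in `PP`. -/
def iidLaws (PP : Set (Measure (RV d))) : Set (Measure (Seq d)) :=
  {μ | ∃ P ∈ PP, IsIIDLaw d μ P}

/-- The set of independent-product sequential laws with all marginals in `PP`. -/
def productLaws (PP : Set (Measure (RV d))) : Set (Measure (Seq d)) :=
  {μ | ∃ Ps : ℕ → Measure (RV d), (∀ t, Ps t ∈ PP) ∧ IsProductLaw d μ Ps}




/-- The density of the `d`-dimensional Gaussian with mean `m` and covariance matrix `S`. -/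
def gaussDensityFn (m : RV d) (S : Matrix (Fin d) (Fin d) ℝ) (x : RV d) : ℝ :=
  (2 * Real.pi) ^ (-(d : ℝ) / 2) * S.det ^ (-(1 : ℝ) / 2) *
    Real.exp (-(1 / 2) * ((x - m) ⬝ᵥ (S⁻¹ *ᵥ (x - m))))

/-- A finite mixture of nondegenerate Gaussian densities. -/
def IsGaussianMixture (g : RV d → ℝ) : Prop :=
  ∃ (k : ℕ) (α : Fin k → ℝ) (ms : Fin k → RV d) (Ss : Fin k → Matrix (Fin d) (Fin d) ℝ),
    (∀ i, 0 ≤ α i) ∧ (∑ i, α i = 1) ∧ (∀ i, (Ss i).PosDef) ∧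
    g = fun x => ∑ i, α i * gaussDensityFn d (ms i) (Ss i) x

/-- A log-concave nonnegative function on `ℝ^d`. -/
def IsLogConcaveFn (p : RV d → ℝ) : Prop :=
  (∀ x, 0 ≤ p x) ∧
    ∀ (x y : RV d) (l : ℝ), 0 ≤ l → l ≤ 1 →
      p x ^ l * p y ^ (1 - l) ≤ p (l • x + (1 - l) • y)

/-- A log-concave probability density on `ℝ^d`. -/
def IsLogConcaveDensity (p : RV d → ℝ) : Prop :=
  Measurable p ∧ IsLogConcaveFn d p ∧ ∫ x, p x = 1

/-- The set `𝓛` of laws on `ℝ^d` with a log-concave Lebesgue density. -/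
def logConcaveLaws : Set (Measure (RV d)) :=
  {P | IsProbabilityMeasure P ∧ ∃ p : RV d → ℝ, Measurable p ∧ IsLogConcaveFn d p ∧
    P = volume.withDensity fun x => ENNReal.ofReal (p x)}

/-- The set `𝒢` of nondegenerate Gaussian laws on `ℝ^d`. -/
def gaussianLaws : Set (Measure (RV d)) :=
  {P | ∃ (m : RV d) (S : Matrix (Fin d) (Fin d) ℝ), S.PosDef ∧
    P = volume.withDensity fun x => ENNReal.ofReal (gaussDensityFn d m S x)}

/-- An estimator sequence: a measurable family of (strictly positive) predictable
probability density estimates. -/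
def IsEstimatorSeq (E : (t : ℕ) → (Fin t → RV d) → RV d → ℝ) : Prop :=
  (∀ t, Measurable fun q : (Fin t → RV d) × RV d => E t q.1 q.2) ∧
  (∀ t h x, 0 < E t h x) ∧ (∀ t h, ∫ x, E t h x = 1)

/-- The universal likelihood ratio (ULR) process. Time `t` corresponds to having observed
the `t` samples `ω 0, …, ω (t-1)`. -/
def ULR (E : (t : ℕ) → (Fin t → RV d) → RV d → ℝ) (t : ℕ) (ω : Seq d) : ℝ :=
  if t ≤ d then 1 else
    (∏ j ∈ Finset.Ico d t, E j (fun i : Fin j => ω i) (ω j)) /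
      ⨆ p : {p : RV d → ℝ // IsLogConcaveDensity d p}, ∏ j ∈ Finset.Ico d t, p.1 (ω j)

/-- The prediction (cumulative log-loss) regret of the estimator sequence `E` relative to
the density of `P`. -/
def regret (P : Measure (RV d)) (E : (t : ℕ) → (Fin t → RV d) → RV d → ℝ)
    (t : ℕ) (ω : Seq d) : ℝ :=
  ∑ j ∈ Finset.range t,
    (Real.log ((P.rnDeriv volume (ω j)).toReal) - Real.log (E j (fun i : Fin j => ω i) (ω j)))

/-- The Hellinger distance between two laws on `ℝ^d` (via their Lebesgue densities). -/
def hellinger (P Q : Measure (RV d)) : ℝ :=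
  Real.sqrt ((1 / 2) *
    ∫ x, (Real.sqrt ((P.rnDeriv volume x).toReal) - Real.sqrt ((Q.rnDeriv volume x).toReal)) ^ 2)

/-- The Hellinger distance from `P` to the class of log-concave laws. -/
def dHLC (P : Measure (RV d)) : ℝ :=
  sInf {r | ∃ L ∈ logConcaveLaws d, r = hellinger d P L}

/-- The Kullback–Leibler divergence. -/
def klDivR {α : Type*} [MeasurableSpace α] (P Q : Measure α) : EReal :=
  if P ≪ Q ∧ Integrable (fun x => Real.log ((P.rnDeriv Q x).toReal)) P
  then ((∫ x, Real.log ((P.rnDeriv Q x).toReal) ∂P : ℝ) : EReal) else ⊤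

/-- Membership in `𝒟₁`. -/
def MemD1 (P : Measure (RV d)) : Prop :=
  IsProbabilityMeasure P ∧ P ≪ volume ∧
  Integrable (fun x => max 0 (Real.log ((P.rnDeriv volume x).toReal))) P ∧
  Integrable (fun x => Real.sqrt (∑ i, (x i) ^ 2)) P

/-- The log-likelihood gap `σ_t(P)` between the true density and the log-concave maximum
likelihood. -/
def sigmaT (P : Measure (RV d)) (t : ℕ) (ω : Seq d) : ℝ :=
  (∑ j ∈ Finset.range t, Real.log ((P.rnDeriv volume (ω j)).toReal)) -
    ⨆ p : {p : RV d → ℝ // IsLogConcaveDensity d p},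
      ∑ j ∈ Finset.range t, Real.log (p.1 (ω j))

/-- The mean vector of `P`. -/
def meanVec (P : Measure (RV d)) : RV d := fun i => ∫ x, x i ∂P

/-- `Δ_P = min_{‖v‖=1} E_P |⟨v, X − E_P X⟩|`. -/
def DeltaP (P : Measure (RV d)) : ℝ :=
  sInf {r | ∃ v : RV d, (∑ i, (v i) ^ 2) = 1 ∧
    r = ∫ x, |∑ i, v i * (x i - meanVec d P i)| ∂P}

/-- The class `𝒟_{Box,Lip,B}`: laws with a `1`-Lipschitz density supported on `[-1,1]^d`
taking values in `[1/B, B]` there. -/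
def DBoxLip (B : ℝ) : Set (Measure (RV d)) :=
  {P | IsProbabilityMeasure P ∧ ∃ p : RV d → ℝ, Measurable p ∧
    P = volume.withDensity (fun x => ENNReal.ofReal (p x)) ∧
    (∀ x, ¬ (∀ i, |x i| ≤ 1) → p x = 0) ∧
    (∀ x, (∀ i, |x i| ≤ 1) → 1 / B ≤ p x ∧ p x ≤ B) ∧
    (∀ x y, (∀ i, |x i| ≤ 1) → (∀ i, |y i| ≤ 1) →
      |p x - p y| ≤ Real.sqrt (∑ i, (x i - y i) ^ 2))}



section Martingale

variable {Ω : Type*} {m0 : MeasurableSpace Ω} {μ : Measure Ω} [IsFiniteMeasure μ]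
  {ℱ : Filtration ℕ m0} {M : ℕ → Ω → ℝ}

/-- A nonnegative martingale has constant expectation against nonnegative weights known at the
earlier time. -/
theorem lintegral_mul_eq_of_martingale (hM : Martingale M ℱ μ) (h0 : ∀ t ω, 0 ≤ M t ω)
    {i j : ℕ} (hij : i ≤ j) {f : Ω → ENNReal} (hf : Measurable[ℱ i] f) :
    ∫⁻ ω, f ω * ENNReal.ofReal (M j ω) ∂μ = ∫⁻ ω, f ω * ENNReal.ofReal (M i ω) ∂μ := by
  have hmeas : ∀ t, Measurable fun ω => ENNReal.ofReal (M t ω) := fun t =>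
    (((hM.1 t).mono (ℱ.le t)).measurable).ennreal_ofReal
  have key : (μ.withDensity fun ω => ENNReal.ofReal (M j ω)).trim (ℱ.le i) =
      (μ.withDensity fun ω => ENNReal.ofReal (M i ω)).trim (ℱ.le i) := by
    refine @Measure.ext _ (ℱ i) _ _ fun A hA => ?_
    have hA' := ℱ.le i A hA
    rw [trim_measurableSet_eq _ hA, trim_measurableSet_eq _ hA, withDensity_apply _ hA',
      withDensity_apply _ hA',
      ← ofReal_integral_eq_lintegral_ofReal (hM.integrable j).integrableOn
        (ae_of_all _ (h0 j)),
      ← ofReal_integral_eq_lintegral_ofReal (hM.integrable i).integrableOn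
        (ae_of_all _ (h0 i)),
      hM.setIntegral_eq hij hA]
  have expand : ∀ t, ∫⁻ ω, f ω * ENNReal.ofReal (M t ω) ∂μ =
      ∫⁻ ω, f ω ∂((μ.withDensity fun ω => ENNReal.ofReal (M t ω)).trim (ℱ.le i)) := by
    intro t
    rw [lintegral_trim _ hf,
      lintegral_withDensity_eq_lintegral_mul _ (hmeas t) (hf.mono (ℱ.le i) le_rfl)]
    simp only [Pi.mul_apply, mul_comm]
  rw [expand, expand, key]

/-- A nonnegative adapted process with integrable initial value whose one-step conditional
expectations agree, tested against nonnegative weights, is a martingale. -/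
theorem martingale_of_lintegral_mul_eq_succ (hadp : StronglyAdapted ℱ M)
    (h0 : ∀ t ω, 0 ≤ M t ω) (hint : ∫⁻ ω, ENNReal.ofReal (M 0 ω) ∂μ ≠ ⊤)
    (hM : ∀ (t : ℕ) (f : Ω → ENNReal), Measurable[ℱ t] f →
      ∫⁻ ω, f ω * ENNReal.ofReal (M (t + 1) ω) ∂μ = ∫⁻ ω, f ω * ENNReal.ofReal (M t ω) ∂μ) :
    Martingale M ℱ μ := by
  have hsm : ∀ t, AEStronglyMeasurable (M t) μ := fun t =>
    ((hadp t).mono (ℱ.le t)).aestronglyMeasurable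
  have hfin : ∀ t, ∫⁻ ω, ENNReal.ofReal (M t ω) ∂μ ≠ ⊤ := by
    intro t
    induction t with
    | zero => exact hint
    | succ t ih =>
      have := hM t (fun _ => 1) measurable_const
      simp only [one_mul] at this
      rwa [this]
  have hint' : ∀ t, Integrable (M t) μ := fun t =>
    (lintegral_ofReal_ne_top_iff_integrable (hsm t) (ae_of_all _ (h0 t))).1 (hfin t)
  refine martingale_of_setIntegral_eq_succ hadp hint' fun t A hA => ?_
  have hA' := ℱ.le t A hA
  have hind : ∀ u, ∫⁻ ω, A.indicator (fun _ => (1 : ENNReal)) ω * ENNReal.ofReal (M u ω) ∂μ =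
      ∫⁻ ω in A, ENNReal.ofReal (M u ω) ∂μ := by
    intro u
    rw [← lintegral_indicator hA']
    refine lintegral_congr fun ω => ?_
    by_cases hω : ω ∈ A <;> simp [hω]
  have := hM t (A.indicator fun _ => 1) (measurable_const.indicator hA)
  rw [hind, hind] at this
  rw [integral_eq_lintegral_of_nonneg_ae (ae_of_all _ (h0 t)) (hsm t).restrict,
    integral_eq_lintegral_of_nonneg_ae (ae_of_all _ (h0 (t + 1))) (hsm (t + 1)).restrict, this]

end Martingale

theorem measurable_prefixMap (t : ℕ) : Measurable (prefixMap d t) :=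
  measurable_pi_iff.2 fun s => measurable_pi_apply (s : ℕ)

theorem F_eq_comap_prefixMap (t : ℕ) :
    F d t = MeasurableSpace.comap (prefixMap d t) inferInstance := by
  refine le_antisymm (iSup₂_le fun s hs => ?_) ?_
  · rintro _ ⟨B, hB, rfl⟩
    exact ⟨(fun x => x ⟨s, Finset.mem_range.1 hs⟩) ⁻¹' B, measurable_pi_apply _ hB, rfl⟩
  · rw [← measurable_iff_comap_le]
    refine @measurable_pi_lambda _ _ _ (F d t) _ _ fun s => ?_
    rw [measurable_iff_comap_le]
    exact le_iSup₂_of_le (f := fun (s : ℕ) (_ : s ∈ Finset.range t) =>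
      MeasurableSpace.comap (fun ω : Seq d => ω s) inferInstance) (s : ℕ)
      (Finset.mem_range.2 s.2) le_rfl

theorem measurable_Z (μ Γ : Measure (Seq d)) (t : ℕ) : Measurable[F d t] (Z d μ Γ t) := by
  rw [F_eq_comap_prefixMap]
  exact (Measure.measurable_rnDeriv _ _).ennreal_toReal.comp (comap_measurable _)

variable {d}

theorem Z_nonneg (μ Γ : Measure (Seq d)) (t : ℕ) (ω : Seq d) : 0 ≤ Z d μ Γ t ω :=
  ENNReal.toReal_nonneg

/-- Change of measure: at time `t` the density of `μ` with respect to `Γ` is `Z t`. -/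
theorem lintegral_eq_lintegral_Z_mul {μ Γ : Measure (Seq d)} [IsFiniteMeasure μ]
    [IsFiniteMeasure Γ] (hμ : LocAC d μ Γ) {t : ℕ} {f : Seq d → ENNReal}
    (hf : Measurable[F d t] f) :
    ∫⁻ ω, f ω ∂μ = ∫⁻ ω, ENNReal.ofReal (Z d μ Γ t ω) * f ω ∂Γ := by
  rw [F_eq_comap_prefixMap] at hf
  obtain ⟨g, hg, rfl⟩ := hf.exists_eq_measurable_comp
  have hp := measurable_prefixMap d t
  have : IsFiniteMeasure (prefixLaw d μ t) := by unfold prefixLaw; infer_instance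
  have : IsFiniteMeasure (prefixLaw d Γ t) := by unfold prefixLaw; infer_instance
  have hmap : ∫⁻ ω, (g ∘ prefixMap d t) ω ∂μ = ∫⁻ x, g x ∂(prefixLaw d μ t) :=
    (lintegral_map hg hp).symm
  rw [hmap, ← lintegral_rnDeriv_mul (hμ t) hg.aemeasurable]
  have hfin : ∀ᵐ x ∂(prefixLaw d Γ t),
      (prefixLaw d μ t).rnDeriv (prefixLaw d Γ t) x * g x =
        ENNReal.ofReal ((prefixLaw d μ t).rnDeriv (prefixLaw d Γ t) x).toReal * g x := by
    filter_upwards [Measure.rnDeriv_ne_top (prefixLaw d μ t) (prefixLaw d Γ t)] with x hx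
    rw [ENNReal.ofReal_toReal hx]
  rw [lintegral_congr_ae hfin]
  exact lintegral_map
    ((Measure.measurable_rnDeriv _ _).ennreal_toReal.ennreal_ofReal.mul hg) hp

/-- Up to the forking time, a fork-convex combination agrees with the first law. -/
theorem IsFCC.lintegral_eq_of_le {Γ P Q R : Measure (Seq d)} [IsFiniteMeasure Γ] {s : ℕ}
    {h : Seq d → ℝ} (hR : IsFCC d Γ P Q s h R) {t : ℕ} (hts : t ≤ s) {f : Seq d → ENNReal}
    (hf : Measurable[F d t] f) : ∫⁻ ω, f ω ∂ R = ∫⁻ ω, f ω ∂P := by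
  obtain ⟨_, _, hPΓ, _, _, _, _, _, hRΓ, hZ⟩ := hR
  rw [lintegral_eq_lintegral_Z_mul hRΓ hf, lintegral_eq_lintegral_Z_mul hPΓ hf]
  refine lintegral_congr_ae ?_
  filter_upwards [hZ t] with ω hω
  rw [hω, if_pos hts]

/-- The weight that the `(s,h)`-fork-convex combination of `P` with `Q` puts on `Q`. -/
def forkWeight (Γ P Q : Measure (Seq d)) (s : ℕ) (h : Seq d → ℝ) (ω : Seq d) : ENNReal :=
  ENNReal.ofReal ((1 - h ω) * (Z d P Γ s ω / Z d Q Γ s ω))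

theorem measurable_forkWeight (Γ P Q : Measure (Seq d)) (s : ℕ) {h : Seq d → ℝ}
    (hh : Measurable[F d s] h) : Measurable[F d s] (forkWeight Γ P Q s h) :=
  ((measurable_const.sub hh).mul
    ((measurable_Z d P Γ s).div (measurable_Z d Q Γ s))).ennreal_ofReal

/-- From the forking time on, a fork-convex combination is a mixture of the two laws with
weights known at the forking time. -/
theorem IsFCC.lintegral_eq_add {Γ P Q R : Measure (Seq d)} [IsFiniteMeasure Γ] {s : ℕ}
    {h : Seq d → ℝ} (hR : IsFCC d Γ P Q s h R) {t : ℕ} (hst : s ≤ t) {f : Seq d → ENNReal}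
    (hf : Measurable[F d t] f) :
    ∫⁻ ω, f ω ∂ R = ∫⁻ ω, ENNReal.ofReal (h ω) * f ω ∂P +
      ∫⁻ ω, forkWeight Γ P Q s h ω * f ω ∂Q := by
  obtain ⟨_, _, hPΓ, hQΓ, hh, hI, hnull, _, hRΓ, hZ⟩ := hR
  have hHm : Measurable[F d t] fun ω => ENNReal.ofReal (h ω) * f ω :=
    ((hh.mono ((F d).mono hst) le_rfl).ennreal_ofReal).mul hf
  have hKm : Measurable[F d t] fun ω => forkWeight Γ P Q s h ω * f ω :=
    ((measurable_forkWeight Γ P Q s hh).mono ((F d).mono hst) le_rfl).mul hf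
  have hPm : Measurable fun ω => ENNReal.ofReal (Z d P Γ t ω) * (ENNReal.ofReal (h ω) * f ω) :=
    (((measurable_Z d P Γ t).ennreal_ofReal).mul hHm).mono ((F d).le t) le_rfl
  rw [lintegral_eq_lintegral_Z_mul hRΓ hf, lintegral_eq_lintegral_Z_mul hPΓ hHm,
    lintegral_eq_lintegral_Z_mul hQΓ hKm, ← lintegral_add_left hPm]
  have hnull' : ∀ᵐ ω ∂Γ, ¬ (h ω < 1 ∧ Z d Q Γ s ω = 0) := by
    simpa only [ae_iff, not_not] using hnull
  refine lintegral_congr_ae ?_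
  filter_upwards [hZ t, hnull'] with ω hω hne
  obtain ⟨h0, h1⟩ := hI ω
  have hP := Z_nonneg P Γ t ω
  have hQ := Z_nonneg Q Γ t ω
  have hr : 0 ≤ (1 - h ω) * (Z d P Γ s ω / Z d Q Γ s ω) :=
    mul_nonneg (sub_nonneg.2 h1) (div_nonneg (Z_nonneg P Γ s ω) (Z_nonneg Q Γ s ω))
  have hsplit : Z d R Γ t ω =
      Z d P Γ t ω * h ω + Z d Q Γ t ω * ((1 - h ω) * (Z d P Γ s ω / Z d Q Γ s ω)) := by
    rw [hω]
    split_ifs with hts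
    · obtain rfl := le_antisymm hts hst
      rcases h1.eq_or_lt with h1 | h1
      · simp [h1]
      · have hq : Z d Q Γ t ω ≠ 0 := fun hq => hne ⟨h1, hq⟩
        field_simp
        ring
    · ring
  rw [hsplit, ENNReal.ofReal_add (mul_nonneg hP h0) (mul_nonneg hQ hr), ENNReal.ofReal_mul hP,
    ENNReal.ofReal_mul hQ, forkWeight]
  ring

/-- Nonnegative martingales are preserved under fork-convex combinations. -/
theorem IsFCC.isNM {Γ P Q R : Measure (Seq d)} [IsFiniteMeasure Γ] {s : ℕ} {h : Seq d → ℝ}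
    (hR : IsFCC d Γ P Q s h R) {M : ℕ → Seq d → ℝ} (hP : IsNM d P M) (hQ : IsNM d Q M) :
    IsNM d R M := by
  obtain ⟨h0, hMP⟩ := hP
  obtain ⟨-, hMQ⟩ := hQ
  have ⟨_, _, _, _, hh, _, _, _, _, _⟩ := hR
  have hMm : ∀ t, Measurable[F d t] fun ω => ENNReal.ofReal (M t ω) := fun t =>
    (hMP.1 t).measurable.ennreal_ofReal
  refine ⟨h0, martingale_of_lintegral_mul_eq_succ hMP.1 h0 ?_ fun t f hf => ?_⟩
  · rw [hR.lintegral_eq_of_le (Nat.zero_le s) (hMm 0)]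
    exact (hMP.integrable 0).lintegral_lt_top.ne
  · have hfM : Measurable[F d t] fun ω => f ω * ENNReal.ofReal (M t ω) := hf.mul (hMm t)
    have hfM' : Measurable[F d (t + 1)] fun ω => f ω * ENNReal.ofReal (M (t + 1) ω) :=
      (hf.mono ((F d).mono t.le_succ) le_rfl).mul (hMm (t + 1))
    rcases Nat.lt_or_ge t s with hts | hst
    · rw [hR.lintegral_eq_of_le hts hfM',
        hR.lintegral_eq_of_le hts.le hfM]
      exact lintegral_mul_eq_of_martingale hMP h0 t.le_succ hf
    · have hle := (F d).mono hst
      rw [hR.lintegral_eq_add (hst.trans t.le_succ) hfM',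
        hR.lintegral_eq_add hst hfM]
      simp only [← mul_assoc]
      exact congrArg₂ (· + ·)
        (lintegral_mul_eq_of_martingale hMP h0 t.le_succ
          (((hh.mono hle le_rfl).ennreal_ofReal).mul hf))
        (lintegral_mul_eq_of_martingale hMQ h0 t.le_succ
          (((measurable_forkWeight Γ P Q s hh).mono hle le_rfl).mul hf))

variable (d)


/-- A process is an NM for every law in `PP` iff it is an NM for every
law in the fork-convex hull of `PP`. -/
theorem statement3 (Γ : Measure (Seq d)) (hΓ : IsGamma d Γ)
    (PP : Set (Measure (Seq d))) (hPP : ∀ P ∈ PP, IsProbabilityMeasure P ∧ LocAC d P Γ)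
    (M : ℕ → Seq d → ℝ) :
    (∀ P ∈ PP, IsNM d P M) ↔ (∀ P ∈ fconv d Γ PP, IsNM d P M) := by
  have := hΓ.1
  refine ⟨fun hM P hP => ?_, fun hM P hP => hM P fun S hS => hS.1 hP⟩
  exact hP {R | IsNM d R M} ⟨hM, fun P hP Q hQ s h R hR => hR.isNM hP hQ⟩

end SeqTest
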